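/- arXiv:2408.11143 — 2 statements merged into one kernel-verified Lean document; each statement's English description precedes it below -/
import Mathlib

section
/- The largest projectable subdistribution D̄ of D (i.e., the distribution whose value at p is the span of the values at p of all projectable vector fields lying pointwise in D) has constant dimension dim(D̄) = dim(D) − rank(M) = d − rank(M). -/
/-!
A field in `D` is `∑ c_k v_k + ∑ e_l v_l` for unique coefficients. Its `θ`-components are the `c_k`
and the functions `∑ c_k a_k^i`, `i ≥ dbar`, so it is projectable exactly when the `c_k` depend on
`θ` only and every `∑ c_k a_k^i` is constant in `ξ`. For `c = c(θ)`, constancy in `ξ` forces all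
`ξ`-derivatives of order at least one to vanish, i.e. `M(θ, ξ) c(θ) = 0` for all `ξ`
(`sum_xiDerivs_eq_zero`); conversely `M(θ, ξ) c(θ) = 0` for all `ξ` gives vanishing first
derivatives, hence constancy because `Ξ` is connected. So the value of `D̄` at `p` is contained in
`{∑ c_k v_k(p) + ∑ e_l v_l(p) | M(p) c = 0}`, which has dimension `d - rank M` by rank-nullity.

For equality, each `c₀ ∈ ker M(θ₀, ξ₀)` must extend to a smooth `c(θ)` with `M(θ, ξ) c(θ) = 0` for
all `(θ, ξ)`. Two facts give this. Since `M` has constant rank, `c₀` extends to a smooth section of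
`ker M(·, ξ₀)`, first locally (`exists_local_kernel_section`), then globally by a bump function
(`exists_global_kernel_section`). And `ker M(θ, ξ)` does not depend on `ξ`
(`ker_subset_of_ker_subset_fderiv`), because the `ξ`-derivatives of the rows of `M` lie again in the
row space of `M`.
-/

open scoped BigOperators

/-- Points of `ℝⁿ × ℝᵐ` with coordinates `(θ, ξ)`. -/
abbrev Pt (n m : ℕ) : Type := (Fin n → ℝ) × (Fin m → ℝ)

/-- The normalized vector field
`v_k = ∂_{θᵏ} + Σ_{ī=d̄+1}ⁿ a_k^ī ∂_{θ^ī} + Σ_{j=1}^{m−d+d̄} b_k^j ∂_{ξʲ}` (0-based indices). -/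
noncomputable def vK {n m : ℕ} (dbar d : ℕ)
    (a : Fin dbar → Fin n → Pt n m → ℝ) (b : Fin dbar → Fin m → Pt n m → ℝ)
    (k : Fin dbar) (p : Pt n m) : Pt n m :=
  (fun i => if (i : ℕ) < dbar then (if (i : ℕ) = (k : ℕ) then 1 else 0) else a k i p,
   fun j => if (j : ℕ) < m - (d - dbar) then b k j p else 0)

/-- The normalized vector field
`v_l = Σ_{j=1}^{m−d+d̄} b_l^j ∂_{ξʲ} + ∂_{ξ^{m−d+l}}` (0-based indices). -/
noncomputable def vL {n m : ℕ} (dbar d : ℕ)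
    (bl : Fin (d - dbar) → Fin m → Pt n m → ℝ)
    (l : Fin (d - dbar)) (p : Pt n m) : Pt n m :=
  (0, fun j => if (j : ℕ) < m - (d - dbar) then bl l j p
      else if (j : ℕ) = m - (d - dbar) + (l : ℕ) then 1 else 0)

/-- A vector field on `U = Θ × Ξ` is projectable iff its θ-components are
independent of ξ. -/
def ProjOn {n m : ℕ} (Θ : Set (Fin n → ℝ)) (Ξ : Set (Fin m → ℝ))
    (w : Pt n m → Pt n m) : Prop :=
  ∀ θ ∈ Θ, ∀ ξ ∈ Ξ, ∀ ξ' ∈ Ξ, (w (θ, ξ)).1 = (w (θ, ξ')).1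

/-- Iterated partial derivatives `∂_{ξ^{j₁}} ⋯ ∂_{ξ^{j_r}} g` of a scalar function. -/
noncomputable def xiDerivs {n m : ℕ} : List (Fin m) → (Pt n m → ℝ) → Pt n m → ℝ
  | [], g => g
  | j :: js, g => fun p => fderiv ℝ (xiDerivs js g) p ((0 : Fin n → ℝ), Pi.single j 1)

open scoped ContDiff Topology

/-! ### Kernels of constant rank families -/

theorem exists_generalized_inverse {V W : Type*} [AddCommGroup V] [Module ℝ V]
    [AddCommGroup W] [Module ℝ W] (A : V →ₗ[ℝ] W) :
    ∃ N : W →ₗ[ℝ] V, ∀ x, A (N (A x)) = A x := by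
  obtain ⟨g, hg⟩ := A.rangeRestrict.exists_rightInverse_of_surjective A.range_rangeRestrict
  obtain ⟨N, hN⟩ := g.exists_extend
  refine ⟨N, fun x => ?_⟩
  have h1 : N (A x) = g (A.rangeRestrict x) := LinearMap.congr_fun hN (A.rangeRestrict x)
  have h2 := congrArg Subtype.val (LinearMap.congr_fun hg (A.rangeRestrict x))
  rw [h1]
  exact h2

/-- A vector in `ker (A p₀)`, where `A` has constant rank, extends to a smooth local section `s` of
`ker A`. With `N` a generalized inverse of `A p₀`, the section is `s p = (Q + N ∘ A p)⁻¹ c` for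
`Q = 1 - N ∘ A p₀`. It satisfies the linear equations `A p (s p) = 0` and `Q (s p) = c`, which
determine it uniquely. -/
theorem exists_local_kernel_section {E V W : Type*}
    [NormedAddCommGroup E] [NormedSpace ℝ E]
    [NormedAddCommGroup V] [NormedSpace ℝ V] [FiniteDimensional ℝ V]
    [NormedAddCommGroup W] [NormedSpace ℝ W] [FiniteDimensional ℝ W]
    {O : Set E} (hO : IsOpen O) {A : E → V →L[ℝ] W} (hA : ContDiffOn ℝ ∞ A O)
    {k : ℕ} (hk : ∀ p ∈ O, Module.finrank ℝ (A p : V →ₗ[ℝ] W).ker = k)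
    {p₀ : E} (hp₀ : p₀ ∈ O) {c : V} (hc : A p₀ c = 0) :
    ∃ (s : E → V) (O' : Set E) (Q : V →L[ℝ] V), IsOpen O' ∧ p₀ ∈ O' ∧ O' ⊆ O ∧
      ContDiffOn ℝ ∞ s O' ∧ s p₀ = c ∧
      ∀ p ∈ O', A p (s p) = 0 ∧ Q (s p) = c ∧ ∀ x, A p x = 0 → Q x = 0 → x = 0 := by
  obtain ⟨N', hN'⟩ := exists_generalized_inverse (A p₀ : V →ₗ[ℝ] W)
  set N : W →L[ℝ] V := LinearMap.toContinuousLinearMap N'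
  have hN : ∀ x, A p₀ (N (A p₀ x)) = A p₀ x := hN'
  have : CompleteSpace V := FiniteDimensional.complete ℝ V
  set Q : V →L[ℝ] V := 1 - N ∘L A p₀ with hQ
  set T : E → V →L[ℝ] V := fun p => Q + N ∘L A p with hT
  have hT0 : T p₀ = 1 := by simp [hT, hQ]
  have hTs : ContDiffOn ℝ ∞ T O := contDiffOn_const.add (contDiffOn_const.clm_comp hA)
  have hTc : ContinuousAt T p₀ := (hTs.continuousOn).continuousAt (hO.mem_nhds hp₀)
  have hunit : ∀ᶠ p in 𝓝 p₀, IsUnit (T p) :=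
    hTc.eventually (p := fun S => IsUnit S) (by
      rw [hT0]; exact Units.isOpen.mem_nhds isUnit_one)
  obtain ⟨O', hO's, hO'o, hpO'⟩ := mem_nhds_iff.1 (hunit.and (hO.mem_nhds hp₀))
  refine ⟨fun p => Ring.inverse (T p) c, O', Q, hO'o, hpO', fun p hp => (hO's hp).2, ?_, ?_, ?_⟩
  · intro p hp
    obtain ⟨⟨u, hu⟩, hpO⟩ := hO's hp
    have h1 : ContDiffAt ℝ ∞ Ring.inverse (T p) := by
      rw [← hu]; exact contDiffAt_ringInverse ℝ u
    have h2 : ContDiffAt ℝ ∞ T p := (hTs p hpO).contDiffAt (hO.mem_nhds hpO)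
    exact ((h1.comp p h2).clm_apply contDiffAt_const).contDiffWithinAt
  · simp [hT0]
  · intro p hp
    obtain ⟨hu, hpO⟩ := hO's hp
    have hinj : ∀ x, T p x = 0 → x = 0 := fun x hx => by
      have := DFunLike.congr_fun (Ring.inverse_mul_cancel _ hu) x
      simpa [hx] using this.symm
    -- on `ker (A p)` the operators `T p` and `Q` agree, and `Q` takes values in `ker (A p₀)`
    have hTQ : ∀ x, A p x = 0 → T p x = Q x := fun x hx => by simp [hT, hx]
    have hQker : ∀ x, A p₀ (Q x) = 0 := fun x => by simp [hQ, hN]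
    have hmap : Submodule.map (T p : V →ₗ[ℝ] V) (A p : V →ₗ[ℝ] W).ker
        = (A p₀ : V →ₗ[ℝ] W).ker := by
      apply Submodule.eq_of_le_of_finrank_le
      · rintro _ ⟨x, hx, rfl⟩
        have hx' : A p x = 0 := hx
        change A p₀ (T p x) = 0
        rw [hTQ x hx', hQker]
      · rw [hk p₀ hp₀, ← hk p hpO]
        refine (Submodule.equivMapOfInjective (T p : V →ₗ[ℝ] V) ?_ _).finrank_eq.le
        exact (injective_iff_map_eq_zero _).2 hinj
    obtain ⟨x, hx, hxc⟩ : c ∈ Submodule.map (T p : V →ₗ[ℝ] V) (A p : V →ₗ[ℝ] W).ker := by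
      rw [hmap]; exact hc
    have hx' : A p x = 0 := hx
    have hxc' : T p x = c := hxc
    have hs : Ring.inverse (T p) c = x := by
      rw [← hxc']
      exact DFunLike.congr_fun (Ring.inverse_mul_cancel _ hu) x
    refine ⟨by simp only [hs, hx'], by simp only [hs]; rw [← hTQ x hx', hxc'], ?_⟩
    intro y hy hQy
    exact hinj y (by rw [hTQ y hy, hQy])

/-- If `A` has constant rank on a connected open set and `ker (A p)` is contained in the kernel of
every directional derivative of `A` at `p`, then `ker (A p)` does not depend on `p`.
Differentiating the equations `A p (s p) = 0` and `Q (s p) = c` of a local section `s` gives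
`A p (s' e) = 0` and `Q (s' e) = 0`, so `s' = 0` and `s` is locally constant. -/
theorem ker_subset_of_ker_subset_fderiv {E V W : Type*}
    [NormedAddCommGroup E] [NormedSpace ℝ E]
    [NormedAddCommGroup V] [NormedSpace ℝ V] [FiniteDimensional ℝ V]
    [NormedAddCommGroup W] [NormedSpace ℝ W] [FiniteDimensional ℝ W]
    {O : Set E} (hO : IsOpen O) (hOc : IsPreconnected O)
    {A : E → V →L[ℝ] W} (hA : ContDiffOn ℝ ∞ A O)
    {k : ℕ} (hk : ∀ p ∈ O, Module.finrank ℝ (A p : V →ₗ[ℝ] W).ker = k)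
    (hd : ∀ p ∈ O, ∀ x, A p x = 0 → ∀ e, fderiv ℝ A p e x = 0)
    {p q : E} (hp : p ∈ O) (hq : q ∈ O) {c : V} (hc : A p c = 0) : A q c = 0 := by
  have hle : ∀ p₀ ∈ O, ∀ c, A p₀ c = 0 → ∀ᶠ q in 𝓝 p₀, A q c = 0 := by
    intro p₀ hp₀ c hc
    obtain ⟨s, O', Q, hO'o, hpO', hO'O, hs, hs0, hprop⟩ :=
      exists_local_kernel_section hO hA hk hp₀ hc
    obtain ⟨ε, hε, hball⟩ := Metric.isOpen_iff.1 hO'o p₀ hpO'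
    have hsd : ∀ q ∈ O', DifferentiableAt ℝ s q := fun q hq =>
      (hs.differentiableOn (by simp)).differentiableAt (hO'o.mem_nhds hq)
    have hAd : ∀ q ∈ O', DifferentiableAt ℝ A q := fun q hq =>
      (hA.differentiableOn (by simp)).differentiableAt (hO.mem_nhds (hO'O hq))
    have hzero : ∀ q ∈ O', fderiv ℝ s q = 0 := by
      intro q hq
      obtain ⟨hAq, hQq, hinj⟩ := hprop q hq
      ext e
      apply hinj
      · have h1 := (hAd q hq).hasFDerivAt.clm_apply (hsd q hq).hasFDerivAt
        have h2 : HasFDerivAt (fun y => A y (s y)) (0 : E →L[ℝ] W) q :=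
          (hasFDerivAt_const (0 : W) q).congr_of_eventuallyEq
            (Filter.eventually_of_mem (hO'o.mem_nhds hq) fun y hy => (hprop y hy).1)
        have h3 := DFunLike.congr_fun (h1.unique h2) e
        simpa [hd q (hO'O hq) (s q) hAq e] using h3
      · have h1 := Q.hasFDerivAt.comp q (hsd q hq).hasFDerivAt
        have h2 : HasFDerivAt (Q ∘ s) (0 : E →L[ℝ] V) q :=
          (hasFDerivAt_const c q).congr_of_eventuallyEq
            (Filter.eventually_of_mem (hO'o.mem_nhds hq) fun y hy => (hprop y hy).2.1)
        simpa using DFunLike.congr_fun (h1.unique h2) e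
    filter_upwards [Metric.ball_mem_nhds p₀ hε] with q hq
    have : s q = s p₀ := Metric.isOpen_ball.is_const_of_fderiv_eq_zero (𝕜 := ℝ)
      (convex_ball p₀ ε).isPreconnected
      (fun y hy => (hsd y (hball hy)).differentiableWithinAt)
      (fun y hy => hzero y (hball hy)) hq (Metric.mem_ball_self hε)
    have h := (hprop q (hball hq)).1
    rwa [this, hs0] at h
  have hkey : (A p : V →ₗ[ℝ] W).ker = (A q : V →ₗ[ℝ] W).ker := by
    refine hOc.induction₂ (fun p q => (A p : V →ₗ[ℝ] W).ker = (A q : V →ₗ[ℝ] W).ker) ?_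
      (fun _ _ _ _ _ _ h h' => h.trans h') (fun _ _ _ _ h => h.symm) hp hq
    intro x hx
    -- by the constant rank, it is enough that a finite spanning set of `ker (A x)` stays in the kernel
    obtain ⟨S, hS⟩ := IsNoetherian.noetherian (A x : V →ₗ[ℝ] W).ker
    have hev : ∀ᶠ y in 𝓝 x, ∀ c ∈ S, A y c = 0 := by
      rw [Filter.eventually_all_finset]
      intro c hcS
      exact hle x hx c (show c ∈ (A x : V →ₗ[ℝ] W).ker from hS ▸ Submodule.subset_span hcS)
    filter_upwards [nhdsWithin_le_nhds hev, self_mem_nhdsWithin] with y hy hyO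
    apply Submodule.eq_of_le_of_finrank_le
    · rw [← hS, Submodule.span_le]
      exact fun c hc => hy c hc
    · rw [hk x hx, hk y hyO]
  have : c ∈ (A q : V →ₗ[ℝ] W).ker := hkey ▸ (show c ∈ (A p : V →ₗ[ℝ] W).ker from hc)
  exact this

/-- Multiplying a local section of `ker A` by a bump function makes it global. The values of `A`
outside `O` play no role, as the section vanishes there. -/
theorem exists_global_kernel_section {E V W : Type*}
    [NormedAddCommGroup E] [NormedSpace ℝ E] [FiniteDimensional ℝ E]
    [NormedAddCommGroup V] [NormedSpace ℝ V] [FiniteDimensional ℝ V]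
    [NormedAddCommGroup W] [NormedSpace ℝ W] [FiniteDimensional ℝ W]
    {O : Set E} (hO : IsOpen O) {A : E → V →L[ℝ] W} (hA : ContDiffOn ℝ ∞ A O)
    {k : ℕ} (hk : ∀ p ∈ O, Module.finrank ℝ (A p : V →ₗ[ℝ] W).ker = k)
    {p₀ : E} (hp₀ : p₀ ∈ O) {c : V} (hc : A p₀ c = 0) :
    ∃ s : E → V, ContDiff ℝ ∞ s ∧ s p₀ = c ∧ ∀ p, A p (s p) = 0 := by
  obtain ⟨s, O', Q, hO'o, hpO', hO'O, hs, hs0, hprop⟩ :=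
    exists_local_kernel_section hO hA hk hp₀ hc
  obtain ⟨χ, hχs, -, hχ, -, hχ1⟩ :=
    exists_contDiff_tsupport_subset (n := ⊤) (hO'o.mem_nhds hpO')
  refine ⟨fun p => χ p • s p, ?_, by simp [hχ1, hs0], ?_⟩
  · rw [contDiff_iff_contDiffAt]
    intro p
    by_cases hp : p ∈ tsupport χ
    · exact hχ.contDiffAt.smul ((hs p (hχs hp)).contDiffAt (hO'o.mem_nhds (hχs hp)))
    · refine (contDiffAt_const (c := (0 : V))).congr_of_eventuallyEq ?_
      filter_upwards [notMem_tsupport_iff_eventuallyEq.1 hp] with y hy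
      simp [hy]
  · intro p
    by_cases hp : p ∈ O'
    · simp [(hprop p hp).1]
    · have : χ p = 0 := image_eq_zero_of_notMem_tsupport fun h => hp (hχs h)
      simp [this]

/-! ### Derivatives along the fibres and the operator `M` -/

theorem contDiffOn_xiDerivs {n m : ℕ} {O : Set (Pt n m)} (hO : IsOpen O)
    {g : Pt n m → ℝ} (hg : ContDiffOn ℝ ∞ g O) (js : List (Fin m)) :
    ContDiffOn ℝ ∞ (xiDerivs js g) O := by
  induction js with
  | nil => exact hg
  | cons j js ih =>
    exact (ih.fderiv_of_isOpen hO (by simp)).clm_apply contDiffOn_const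

/-- Restricting to a slice `{θ} × Ξ`, the derivative in `ξ` along `e` is the full derivative along
`(0, e)`. -/
theorem hasFDerivAt_slice {n m : ℕ} {F : Type*} [NormedAddCommGroup F] [NormedSpace ℝ F]
    {g : Pt n m → F} {θ : Fin n → ℝ} {ξ : Fin m → ℝ} (hg : DifferentiableAt ℝ g (θ, ξ)) :
    HasFDerivAt (fun y => g (θ, y))
      (fderiv ℝ g (θ, ξ) ∘L ContinuousLinearMap.inr ℝ (Fin n → ℝ) (Fin m → ℝ)) ξ :=
  hg.hasFDerivAt.comp ξ (hasFDerivAt_prodMk_right θ ξ)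

theorem clm_pi_eq_zero {m : ℕ} {F : Type*} [NormedAddCommGroup F] [NormedSpace ℝ F]
    {f : (Fin m → ℝ) →L[ℝ] F} (h : ∀ j, f (Pi.single j 1) = 0) : f = 0 := by
  have : (f : (Fin m → ℝ) →ₗ[ℝ] F) = 0 :=
    (Pi.basisFun ℝ (Fin m)).ext fun j => by simpa using h j
  ext1 x
  exact LinearMap.congr_fun this x

/-- The matrix with rows `R i p`, acting on `ℝ^dbar`. -/
noncomputable def rowOp {n m dbar r : ℕ} (R : Fin r → Pt n m → Fin dbar → ℝ) (p : Pt n m) :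
    (Fin dbar → ℝ) →L[ℝ] (Fin r → ℝ) :=
  LinearMap.toContinuousLinearMap (Matrix.of fun i k => R i p k).mulVecLin

theorem rowOp_apply {n m dbar r : ℕ} (R : Fin r → Pt n m → Fin dbar → ℝ) (p : Pt n m)
    (c : Fin dbar → ℝ) (i : Fin r) : rowOp R p c i = ∑ k, R i p k * c k := rfl

theorem contDiffOn_rowOp {n m dbar r : ℕ} {R : Fin r → Pt n m → Fin dbar → ℝ}
    {O : Set (Pt n m)} (hR : ∀ i k, ContDiffOn ℝ ∞ (fun p => R i p k) O) :
    ContDiffOn ℝ ∞ (rowOp R) O := by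
  rw [contDiffOn_clm_apply]
  intro c
  rw [contDiffOn_pi]
  intro i
  simp only [rowOp_apply]
  exact ContDiffOn.sum fun k _ => (hR i k).mul contDiffOn_const

theorem finrank_ker_rowOp {n m dbar r rk : ℕ} {R : Fin r → Pt n m → Fin dbar → ℝ} {p : Pt n m}
    (h : (Matrix.of fun i k => R i p k).rank = rk) :
    Module.finrank ℝ (rowOp R p : (Fin dbar → ℝ) →ₗ[ℝ] (Fin r → ℝ)).ker = dbar - rk := by
  have h1 := (rowOp R p : (Fin dbar → ℝ) →ₗ[ℝ] (Fin r → ℝ)).finrank_range_add_finrank_ker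
  have h2 : Module.finrank ℝ (rowOp R p : (Fin dbar → ℝ) →ₗ[ℝ] (Fin r → ℝ)).range = rk := h
  simp only [Module.finrank_fin_fun] at h1
  omega

theorem sum_mul_eq_zero_of_mem_span {n m dbar r : ℕ} {R : Fin r → Pt n m → Fin dbar → ℝ}
    {p : Pt n m} {c : Fin dbar → ℝ} (hc : rowOp R p c = 0) {v : Fin dbar → ℝ}
    (hv : v ∈ Submodule.span ℝ (Set.range fun i => R i p)) : ∑ k, v k * c k = 0 := by
  induction hv using Submodule.span_induction with
  | mem x hx =>
    obtain ⟨i, rfl⟩ := hx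
    exact congrFun hc i
  | zero => simp
  | add x y _ _ hx hy => simp [add_mul, Finset.sum_add_distrib, hx, hy]
  | smul t x _ hx => simp [mul_assoc, ← Finset.mul_sum, hx]

/-! ### The normalized frame of `D` -/

section Frame

variable {n m dbar d : ℕ} (a : Fin dbar → Fin n → Pt n m → ℝ)
  (b : Fin dbar → Fin m → Pt n m → ℝ) (bl : Fin (d - dbar) → Fin m → Pt n m → ℝ)

/-- The vector of `D(p)` with given coefficients in the normalized frame. -/
noncomputable def frameComb (p : Pt n m) : (Fin dbar ⊕ Fin (d - dbar) → ℝ) →ₗ[ℝ] Pt n m :=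
  Fintype.linearCombination ℝ
    (Sum.elim (fun k => vK dbar d a b k p) (fun l => vL dbar d bl l p))

theorem frameComb_apply (p : Pt n m) (x : Fin dbar ⊕ Fin (d - dbar) → ℝ) :
    frameComb a b bl p x =
      ∑ k, x (Sum.inl k) • vK dbar d a b k p + ∑ l, x (Sum.inr l) • vL dbar d bl l p := by
  simp [frameComb, Fintype.linearCombination_apply]

theorem frameComb_fst_of_lt (p : Pt n m) (x : Fin dbar ⊕ Fin (d - dbar) → ℝ)
    (k : Fin dbar) (hk : (k : ℕ) < n) :
    (frameComb a b bl p x).1 ⟨k, hk⟩ = x (Sum.inl k) := by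
  rw [frameComb_apply]
  simp [vK, vL, Prod.fst_sum, Finset.sum_apply, Fin.val_inj]

theorem frameComb_fst_of_ge (p : Pt n m) (x : Fin dbar ⊕ Fin (d - dbar) → ℝ)
    (i : Fin n) (hi : dbar ≤ (i : ℕ)) :
    (frameComb a b bl p x).1 i = ∑ k, x (Sum.inl k) * a k i p := by
  rw [frameComb_apply]
  simp [vK, vL, Prod.fst_sum, Finset.sum_apply, hi.not_gt]

theorem contDiffOn_frameComb {O : Set (Pt n m)}
    (ha : ∀ k i, ContDiffOn ℝ ∞ (a k i) O) (hb : ∀ k j, ContDiffOn ℝ ∞ (b k j) O)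
    (hbl : ∀ l j, ContDiffOn ℝ ∞ (bl l j) O)
    {x : Pt n m → Fin dbar ⊕ Fin (d - dbar) → ℝ} (hx : ContDiffOn ℝ ∞ x O) :
    ContDiffOn ℝ ∞ (fun p => frameComb a b bl p (x p)) O := by
  simp only [frameComb_apply]
  have hx' := contDiffOn_pi.1 hx
  refine (ContDiffOn.sum fun k _ => (hx' _).smul ?_).add
    (ContDiffOn.sum fun l _ => (hx' _).smul ?_)
  · refine ContDiffOn.prodMk (contDiffOn_pi.2 fun i => ?_) (contDiffOn_pi.2 fun j => ?_)
    · by_cases h : (i : ℕ) < dbar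
      · simpa only [h, if_true] using contDiffOn_const
      · simpa only [h, if_false] using ha k i
    · by_cases h : (j : ℕ) < m - (d - dbar)
      · simpa only [h, if_true] using hb k j
      · simpa only [h, if_false] using contDiffOn_const
  · refine contDiffOn_const.prodMk (contDiffOn_pi.2 fun j => ?_)
    by_cases h : (j : ℕ) < m - (d - dbar)
    · simpa only [h, if_true] using hbl l j
    · simpa only [h, if_false] using contDiffOn_const

end Frame

/-- If a combination of the `g k`, with coefficients independent of `ξ`, is constant on the slice
`{θ} × Ξ`, then the same combination of iterated `ξ`-derivatives of order at least one vanishes on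
that slice. -/
theorem sum_xiDerivs_eq_zero {n m dbar : ℕ} {Θ : Set (Fin n → ℝ)} {Ξ : Set (Fin m → ℝ)}
    (hΘ : IsOpen Θ) (hΞ : IsOpen Ξ) {g : Fin dbar → Pt n m → ℝ}
    (hg : ∀ k, ContDiffOn ℝ ∞ (g k) (Θ ×ˢ Ξ)) {θ : Fin n → ℝ} (hθ : θ ∈ Θ)
    {c : Fin dbar → ℝ} {t : ℝ} (hconst : ∀ ξ ∈ Ξ, ∑ k, g k (θ, ξ) * c k = t)
    {js : List (Fin m)} (hjs : js ≠ []) {ξ : Fin m → ℝ} (hξ : ξ ∈ Ξ) :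
    ∑ k, xiDerivs js (g k) (θ, ξ) * c k = 0 := by
  have hstep : ∀ (js : List (Fin m)) (t : ℝ),
      (∀ ξ ∈ Ξ, ∑ k, xiDerivs js (g k) (θ, ξ) * c k = t) →
      ∀ (j : Fin m), ∀ ξ ∈ Ξ, ∑ k, xiDerivs (j :: js) (g k) (θ, ξ) * c k = 0 := by
    intro js t h j ξ hξ
    have hO : Θ ×ˢ Ξ ∈ 𝓝 (θ, ξ) := (hΘ.prod hΞ).mem_nhds ⟨hθ, hξ⟩
    have h1 := HasFDerivAt.fun_sum (u := Finset.univ) fun k _ =>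
      (hasFDerivAt_slice ((((contDiffOn_xiDerivs (hΘ.prod hΞ) (hg k) js).differentiableOn
        (by simp)).differentiableAt hO))).mul_const (c k)
    have h2 := (hasFDerivAt_const (𝕜 := ℝ) t ξ).congr_of_eventuallyEq
      (Filter.eventually_of_mem (hΞ.mem_nhds hξ) h)
    have h3 := DFunLike.congr_fun (h1.unique h2) (Pi.single j 1)
    simpa [xiDerivs, mul_comm] using h3
  induction js generalizing ξ with
  | nil => exact absurd rfl hjs
  | cons j js ih =>
    by_cases h : js = []
    · subst h
      exact hstep [] t hconst j ξ hξ
    · exact hstep js 0 (fun ξ hξ => ih h hξ) j ξ hξ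

/-! ### The dimension of the largest projectable subdistribution -/

/-- the largest projectable subdistribution `D̄` of `D` — whose value at `p`
is the span of the values at `p` of all projectable vector fields lying pointwise in `D` —
has constant dimension `dim D̄ = dim D − rank M = d − rank M`. -/
theorem stmt4 (n m dbar d : ℕ) (hn : 1 ≤ n) (hm : 1 ≤ m)
    (hdd : dbar ≤ d) (hdn : dbar ≤ n) (hdm : d - dbar ≤ m)
    (Θ : Set (Fin n → ℝ)) (Ξ : Set (Fin m → ℝ))
    (hΘo : IsOpen Θ) (hΘc : IsConnected Θ) (hΞo : IsOpen Ξ) (hΞc : IsConnected Ξ)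
    (a : Fin dbar → Fin n → Pt n m → ℝ)
    (b : Fin dbar → Fin m → Pt n m → ℝ)
    (bl : Fin (d - dbar) → Fin m → Pt n m → ℝ)
    (ha : ∀ k i, ContDiffOn ℝ (⊤ : ℕ∞) (a k i) (Θ ×ˢ Ξ))
    (hb : ∀ k j, ContDiffOn ℝ (⊤ : ℕ∞) (b k j) (Θ ×ˢ Ξ))
    (hbl : ∀ l j, ContDiffOn ℝ (⊤ : ℕ∞) (bl l j) (Θ ×ˢ Ξ))
    (hindep : ∀ p ∈ Θ ×ˢ Ξ, LinearIndependent ℝ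
      (Sum.elim (fun k => vK dbar d a b k p) (fun l => vL dbar d bl l p)))
    -- the matrix M and its constant rank rk
    (r rk : ℕ) (Mrow : Fin r → Pt n m → Fin dbar → ℝ)
    (hMrows : ∀ i : Fin r, ∃ (js : List (Fin m)) (ib : Fin n), js ≠ [] ∧ dbar ≤ (ib : ℕ) ∧
      ∀ p k, Mrow i p k = xiDerivs js (fun q => a k ib q) p)
    (hMrank : ∀ p ∈ Θ ×ˢ Ξ, (Matrix.of fun i k => Mrow i p k).rank = rk)
    (hMspan : ∀ (js : List (Fin m)), js ≠ [] → ∀ ib : Fin n, dbar ≤ (ib : ℕ) →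
      ∀ p ∈ Θ ×ˢ Ξ, (fun k => xiDerivs js (fun q => a k ib q) p) ∈
        Submodule.span ℝ (Set.range fun i => Mrow i p)) :
    ∀ p ∈ Θ ×ˢ Ξ,
      Module.finrank ℝ (Submodule.span ℝ
        {vv : Pt n m | ∃ w : Pt n m → Pt n m,
          ContDiffOn ℝ (⊤ : ℕ∞) w (Θ ×ˢ Ξ) ∧ ProjOn Θ Ξ w ∧
          (∀ q ∈ Θ ×ˢ Ξ, w q ∈ Submodule.span ℝ (Set.range (Sum.elim
            (fun k => vK dbar d a b k q) (fun l => vL dbar d bl l q)))) ∧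
          w p = vv}) = d - rk := by
  have hU : IsOpen (Θ ×ˢ Ξ) := hΘo.prod hΞo
  have hrow : ∀ i k, ContDiffOn ℝ ∞ (fun p => Mrow i p k) (Θ ×ˢ Ξ) := by
    intro i k
    obtain ⟨js, ib, -, -, h⟩ := hMrows i
    simpa only [h] using contDiffOn_xiDerivs hU (ha k ib) js
  have hMs : ContDiffOn ℝ ∞ (rowOp Mrow) (Θ ×ˢ Ξ) := contDiffOn_rowOp hrow
  have hker : ∀ q ∈ Θ ×ˢ Ξ, Module.finrank ℝ
      (rowOp Mrow q : (Fin dbar → ℝ) →ₗ[ℝ] (Fin r → ℝ)).ker = dbar - rk :=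
    fun q hq => finrank_ker_rowOp (hMrank q hq)
  -- `ker M` is independent of `ξ`, since `ξ`-derivatives of rows of `M` stay in its row space
  have hparallel : ∀ θ ∈ Θ, ∀ ξ ∈ Ξ, ∀ ξ' ∈ Ξ, ∀ c, rowOp Mrow (θ, ξ) c = 0 →
      rowOp Mrow (θ, ξ') c = 0 := by
    intro θ hθ ξ hξ ξ' hξ' c hc
    refine ker_subset_of_ker_subset_fderiv hΞo hΞc.isPreconnected
      (A := fun y => rowOp Mrow (θ, y)) (k := dbar - rk) ?_ (fun y hy => hker _ ⟨hθ, hy⟩) ?_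
      hξ hξ' hc
    · exact hMs.comp (contDiff_prodMk_right θ).contDiffOn fun y hy => ⟨hθ, hy⟩
    · intro y hy x hx e
      have hq : (θ, y) ∈ Θ ×ˢ Ξ := ⟨hθ, hy⟩
      have hdiff : DifferentiableAt ℝ (rowOp Mrow) (θ, y) :=
        (hMs.differentiableOn (by simp)).differentiableAt (hU.mem_nhds hq)
      have hS := hasFDerivAt_slice hdiff
      have hSx := hS.clm_apply (hasFDerivAt_const x y)
      rw [hS.fderiv]
      -- as a linear map in the direction `e`, it suffices to treat coordinate directions
      suffices hz : (fderiv ℝ (rowOp Mrow) (θ, y) ∘L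
          ContinuousLinearMap.inr ℝ (Fin n → ℝ) (Fin m → ℝ)).flip x = 0 from
        DFunLike.congr_fun hz e
      apply clm_pi_eq_zero
      intro j
      ext i
      obtain ⟨js, ib, hjs, hib, h⟩ := hMrows i
      have h1 := (hasFDerivAt_pi'.1 hSx) i
      have h2 : HasFDerivAt (fun y' => rowOp Mrow (θ, y') x i)
          (∑ k, x k • (fderiv ℝ (xiDerivs js (fun q => a k ib q)) (θ, y) ∘L
            ContinuousLinearMap.inr ℝ (Fin n → ℝ) (Fin m → ℝ))) y := by
        simp only [rowOp_apply, h]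
        exact HasFDerivAt.fun_sum fun k _ =>
          (hasFDerivAt_slice (((contDiffOn_xiDerivs hU (ha k ib) js).differentiableOn
            (by simp)).differentiableAt (hU.mem_nhds hq))).mul_const (x k)
      have h3 := DFunLike.congr_fun (h1.unique h2) (Pi.single j 1)
      have h4 := sum_mul_eq_zero_of_mem_span hx (hMspan (j :: js) (by simp) ib hib _ hq)
      simp only [xiDerivs] at h4
      simp only [mul_comm _ (x _)] at h4
      simpa [h4] using h3
  rintro ⟨θ₀, ξ₀⟩ ⟨hθ₀, hξ₀⟩
  have hp : (θ₀, ξ₀) ∈ Θ ×ˢ Ξ := ⟨hθ₀, hξ₀⟩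
  -- the admissible coefficient vectors: those whose `v_k`-part is killed by `M`
  set G : (Fin dbar ⊕ Fin (d - dbar) → ℝ) →ₗ[ℝ] (Fin r → ℝ) :=
    (rowOp Mrow (θ₀, ξ₀) : (Fin dbar → ℝ) →ₗ[ℝ] (Fin r → ℝ)) ∘ₗ LinearMap.funLeft ℝ ℝ Sum.inl
    with hG
  have hGmem : ∀ x, x ∈ G.ker ↔ rowOp Mrow (θ₀, ξ₀) (fun k => x (Sum.inl k)) = 0 :=
    fun x => Iff.rfl
  have hset : {vv : Pt n m | ∃ w : Pt n m → Pt n m,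
          ContDiffOn ℝ (⊤ : ℕ∞) w (Θ ×ˢ Ξ) ∧ ProjOn Θ Ξ w ∧
          (∀ q ∈ Θ ×ˢ Ξ, w q ∈ Submodule.span ℝ (Set.range (Sum.elim
            (fun k => vK dbar d a b k q) (fun l => vL dbar d bl l q)))) ∧
          w (θ₀, ξ₀) = vv} = (G.ker.map (frameComb a b bl (θ₀, ξ₀)) : Set (Pt n m)) := by
    ext vv
    constructor
    · rintro ⟨w, -, hproj, hspan, rfl⟩
      simp only [← Fintype.range_linearCombination] at hspan
      choose! x hx using hspan
      have hx' : ∀ q ∈ Θ ×ˢ Ξ, frameComb a b bl q (x q) = w q := hx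
      refine ⟨x (θ₀, ξ₀), ?_, hx' _ hp⟩
      rw [SetLike.mem_coe, hGmem]
      -- the `v_k`-coefficients are `θ`-components of `w`, hence independent of `ξ`
      have hcoef : ∀ ξ ∈ Ξ, ∀ k, x (θ₀, ξ) (Sum.inl k) = x (θ₀, ξ₀) (Sum.inl k) := by
        intro ξ hξ k
        have hk : (k : ℕ) < n := k.2.trans_le hdn
        rw [← frameComb_fst_of_lt a b bl (θ₀, ξ) (x (θ₀, ξ)) k hk,
          ← frameComb_fst_of_lt a b bl (θ₀, ξ₀) (x (θ₀, ξ₀)) k hk, hx' (θ₀, ξ) ⟨hθ₀, hξ⟩, hx' _ hp,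
          hproj θ₀ hθ₀ ξ hξ ξ₀ hξ₀]
      ext i
      obtain ⟨js, ib, hjs, hib, h⟩ := hMrows i
      simp only [rowOp_apply, h]
      refine sum_xiDerivs_eq_zero hΘo hΞo (fun k => ha k ib) hθ₀ (t := (w (θ₀, ξ₀)).1 ib)
        (fun ξ hξ => ?_) hjs hξ₀
      rw [← hproj θ₀ hθ₀ ξ hξ ξ₀ hξ₀, ← hx' (θ₀, ξ) ⟨hθ₀, hξ⟩, frameComb_fst_of_ge _ _ _ _ _ _ hib]
      exact Finset.sum_congr rfl fun k _ => by rw [hcoef ξ hξ k, mul_comm]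
    · rintro ⟨x, hx, rfl⟩
      obtain ⟨c, hcs, hc0, hcM⟩ := exists_global_kernel_section hΘo
        (A := fun θ => rowOp Mrow (θ, ξ₀)) (k := dbar - rk)
        (hMs.comp (contDiff_prodMk_left ξ₀).contDiffOn fun y hy => ⟨hy, hξ₀⟩)
        (fun θ hθ => hker _ ⟨hθ, hξ₀⟩) hθ₀ ((hGmem x).1 hx)
      refine ⟨fun q => frameComb a b bl q (Sum.elim (c q.1) fun l => x (Sum.inr l)),
        ?_, ?_, ?_, ?_⟩
      · refine contDiffOn_frameComb a b bl ha hb hbl (contDiffOn_pi.2 ?_)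
        rintro (k | l)
        · exact ((contDiff_pi.1 hcs k).comp contDiff_fst).contDiffOn
        · exact contDiffOn_const
      -- projectability: `c θ` is killed by `M` on all of `{θ} × Ξ`, so the `θ`-components have zero
      -- first `ξ`-derivatives
      · intro θ hθ ξ hξ ξ' hξ'
        ext i
        by_cases hi : (i : ℕ) < dbar
        · have h1 := fun y => frameComb_fst_of_lt a b bl (θ, y)
            (Sum.elim (c θ) fun l => x (Sum.inr l)) ⟨i, hi⟩ i.2
          exact (h1 ξ).trans (h1 ξ').symm
        · push Not at hi
          simp only [frameComb_fst_of_ge _ _ _ _ _ _ hi, Sum.elim_inl]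
          have hder : ∀ y ∈ Ξ, HasFDerivAt (fun y => ∑ k, c θ k * a k i (θ, y))
              (∑ k, c θ k • (fderiv ℝ (a k i) (θ, y) ∘L
                ContinuousLinearMap.inr ℝ (Fin n → ℝ) (Fin m → ℝ))) y := fun y hy =>
            HasFDerivAt.fun_sum fun k _ =>
              (hasFDerivAt_slice (((ha k i).differentiableOn (by simp)).differentiableAt
                (hU.mem_nhds ⟨hθ, hy⟩))).const_mul (c θ k)
          refine hΞo.is_const_of_fderiv_eq_zero (𝕜 := ℝ) hΞc.isPreconnected
            (f := fun y => ∑ k, c θ k * a k i (θ, y))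
            (fun y hy => (hder y hy).differentiableAt.differentiableWithinAt) ?_ hξ hξ'
          intro y hy
          rw [(hder y hy).fderiv]
          apply clm_pi_eq_zero
          intro j
          have h4 := sum_mul_eq_zero_of_mem_span
            (hparallel θ hθ ξ₀ hξ₀ y hy _ (hcM θ)) (hMspan [j] (by simp) i hi _ ⟨hθ, hy⟩)
          simpa [xiDerivs, mul_comm] using h4
      · intro q hq
        rw [← Fintype.range_linearCombination]
        exact ⟨_, rfl⟩
      · change frameComb a b bl (θ₀, ξ₀) _ = _
        congr 1
        ext (k | l)
        · exact congrFun hc0 k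
        · rfl
  rw [hset, Submodule.span_eq]
  have hinj : Function.Injective (frameComb a b bl (θ₀, ξ₀)) :=
    linearIndependent_iff_injective_fintypeLinearCombination.1 (hindep _ hp)
  rw [← (Submodule.equivMapOfInjective _ hinj G.ker).finrank_eq]
  have h1 := G.finrank_range_add_finrank_ker
  have h2 : Module.finrank ℝ G.range = rk := by
    rw [hG, LinearMap.range_comp_of_range_eq_top _ (LinearMap.range_eq_top.2
      (LinearMap.funLeft_surjective_of_injective ℝ ℝ _ Sum.inl_injective))]
    exact hMrank _ hp
  simp only [Module.finrank_fintype_fun_eq_card, Fintype.card_sum, Fintype.card_fin] at h1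
  omega
end

section
/- Let M̂ be a matrix formed by a maximal set of rows of M that are linearly independent at every point of U (so M̂ has rank(M) rows), and define the 1-forms (ρ¹,…,ρ^{rank M})ᵀ = −M̂·(dθ¹,…,dθ^d̄)ᵀ. Then the codistribution P̂(p) = span{ρ¹(p),…,ρ^{rank M}(p), ω¹(p),…,ω^{n−d̄}(p)} is the smallest codistribution on U that is invariant w.r.t. span{∂_ξ} and contains P ∩ span{dθ}: (i) P̂ ⊆ span{dθ¹,…,dθⁿ} and P̂ contains P ∩ span{dθ} pointwise; (ii) P̂ is invariant w.r.t. span{∂_ξ}; (iii) every codistribution on U that is invariant w.r.t. span{∂_ξ} and contains P ∩ span{dθ} contains P̂ pointwise; moreover the listed spanning 1-forms of P̂ are linearly independent at every point, so dim P̂(p) = n − d̄ + rank(M). -/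
/-! Invariance of a codistribution spanned by a frame can be tested on the frame: if
`ω = Σ cᵢ ηᵢ` then the `cᵢ` are differentiable (`differentiableAt_coeff`) and the Leibniz rule
gives `∂_ξ ω = Σ cᵢ ∂_ξ ηᵢ + Σ (∂_ξ cᵢ) ηᵢ` (`invariantXi_span`). For `P̂` the frame is `ρ, ω^s`.
Each `∂_ξ`-derivative of `ω^s = dθ^s - Σ a_k^s dθᵏ` or of a `ρ` is `-Σ w_k dθᵏ` with `w` an
iterated derivative of a row of `L`, hence in the row space of `M`. Since `M̂` has `rank M`
independent rows taken from `M`, it has the same row space, so `P̂` is invariant. Conversely an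
invariant codistribution containing the `ω^s` contains all their iterated derivatives, in
particular the `ρ`.

Independence and `P ∩ span{dθ} ⊆ P̂` are read off from triangular shapes: the `dθ^s` coefficient
(`s > d̄`) isolates `ω^s` among the frame of `P̂`, and the `dξ^t` coefficient isolates `ω^t`
among the frame of `P`. -/

open scoped BigOperators

/-- The covector `Σ αᵢ dθⁱ + Σ βⱼ dξʲ` in the dual space `(ℝⁿ×ℝᵐ)*`. -/
noncomputable def covec {n m : ℕ} (α : Fin n → ℝ) (β : Fin m → ℝ) :
    Module.Dual ℝ (Pt n m) :=
  (∑ i, α i • ((LinearMap.proj i).comp (LinearMap.fst ℝ (Fin n → ℝ) (Fin m → ℝ)))) +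
  (∑ j, β j • ((LinearMap.proj j).comp (LinearMap.snd ℝ (Fin n → ℝ) (Fin m → ℝ))))

/-- The normalized 1-form `ω^s = Σ_{k=1}^{d̄} α_k^s dθᵏ + dθ^{d̄+s}`. -/
noncomputable def omS {n m : ℕ} (dbar : ℕ) (α : Fin dbar → Fin n → Pt n m → ℝ)
    (s : Fin n) (p : Pt n m) : Module.Dual ℝ (Pt n m) :=
  covec (fun i => if h : (i : ℕ) < dbar then α ⟨(i : ℕ), h⟩ s p
      else if i = s then 1 else 0) 0

/-- The normalized 1-form
`ω^t = Σ_{k=1}^{d̄} α_k^t dθᵏ + dξ^{t−n+d̄} + Σ_{l=m−d+d̄+1}^{m} β_l^t dξˡ`. -/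
noncomputable def omT {n m : ℕ} (dbar d : ℕ) (αt : Fin dbar → Fin m → Pt n m → ℝ)
    (βt : Fin (d - dbar) → Fin m → Pt n m → ℝ)
    (t : Fin m) (p : Pt n m) : Module.Dual ℝ (Pt n m) :=
  covec (fun i => if h : (i : ℕ) < dbar then αt ⟨(i : ℕ), h⟩ t p else 0)
    (fun j => if (j : ℕ) = (t : ℕ) then 1
      else if h : (j : ℕ) - (m - (d - dbar)) < d - dbar ∧ m - (d - dbar) ≤ (j : ℕ)
        then βt ⟨(j : ℕ) - (m - (d - dbar)), h.1⟩ t p else 0)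

/-- The codistribution `span{dθ¹,…,dθⁿ}`. -/
noncomputable def spanDTheta (n m : ℕ) : Submodule ℝ (Module.Dual ℝ (Pt n m)) :=
  Submodule.span ℝ (Set.range fun i : Fin n => covec (Pi.single i 1) (0 : Fin m → ℝ))

/-- The 1-form obtained from `ω` by taking the `ξʲ`-partial derivative of each
coefficient (the Lie derivative of `ω` along `∂_{ξʲ}`). -/
noncomputable def xiLie {n m : ℕ} (j : Fin m) (ω : Pt n m → Module.Dual ℝ (Pt n m))
    (p : Pt n m) : Module.Dual ℝ (Pt n m) :=
  covec
    (fun i => fderiv ℝ (fun q => ω q ((Pi.single i 1 : Fin n → ℝ), (0 : Fin m → ℝ))) p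
      ((0 : Fin n → ℝ), (Pi.single j 1 : Fin m → ℝ)))
    (fun j' => fderiv ℝ (fun q => ω q ((0 : Fin n → ℝ), (Pi.single j' 1 : Fin m → ℝ))) p
      ((0 : Fin n → ℝ), (Pi.single j 1 : Fin m → ℝ)))

/-- A 1-form on `U` is smooth iff all its coefficients are smooth. -/
def Smooth1FormOn {n m : ℕ} (U : Set (Pt n m)) (ω : Pt n m → Module.Dual ℝ (Pt n m)) :
    Prop :=
  ∀ u : Pt n m, ContDiffOn ℝ (⊤ : ℕ∞) (fun p => ω p u) U

/-- A codistribution `Q` on `U` is invariant w.r.t. `span{∂_ξ}` iff for every smooth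
1-form valued pointwise in `Q`, all its ξ-coefficient-derivative 1-forms are again
valued pointwise in `Q`. -/
def InvariantXi {n m : ℕ} (U : Set (Pt n m))
    (Q : Pt n m → Submodule ℝ (Module.Dual ℝ (Pt n m))) : Prop :=
  ∀ ω : Pt n m → Module.Dual ℝ (Pt n m), Smooth1FormOn U ω → (∀ p ∈ U, ω p ∈ Q p) →
    ∀ j : Fin m, ∀ p ∈ U, xiLie j ω p ∈ Q p

/-- A codistribution on `U`: a pointwise span of finitely many smooth 1-forms,
of constant dimension. -/
def IsCodistribOn {n m : ℕ} (U : Set (Pt n m))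
    (Q : Pt n m → Submodule ℝ (Module.Dual ℝ (Pt n m))) : Prop :=
  ∃ (N : ℕ) (ω : Fin N → Pt n m → Module.Dual ℝ (Pt n m)),
    (∀ i, Smooth1FormOn U (ω i)) ∧
    (∀ p ∈ U, Q p = Submodule.span ℝ (Set.range fun i => ω i p)) ∧
    ∃ dim, ∀ p ∈ U, Module.finrank ℝ (Q p) = dim

/-! ### Covectors with `dθ¹,…,dθ^d̄` components -/

open Topology

/-- The linear map sending a row vector `w ∈ ℝ^{d̄}` to the covector `Σ_{k ≤ d̄} w_k dθᵏ`. -/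
noncomputable def thetaCovec (n m dbar : ℕ) :
    (Fin dbar → ℝ) →ₗ[ℝ] Module.Dual ℝ (Pt n m) where
  toFun w := covec (fun i => if h : (i : ℕ) < dbar then w ⟨(i : ℕ), h⟩ else 0) 0
  map_add' v w := by
    simp only [covec, Pi.zero_apply, zero_smul, Finset.sum_const_zero, add_zero,
      ← Finset.sum_add_distrib, ← add_smul]
    refine Finset.sum_congr rfl fun i _ => ?_
    split_ifs <;> simp
  map_smul' c w := by
    simp only [covec, Pi.zero_apply, zero_smul, Finset.sum_const_zero, add_zero,
      Finset.smul_sum, smul_smul, RingHom.id_apply]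
    refine Finset.sum_congr rfl fun i _ => ?_
    split_ifs <;> simp

section Covectors

variable {n m : ℕ}

lemma covec_apply (α : Fin n → ℝ) (β : Fin m → ℝ) (u : Pt n m) :
    covec α β u = ∑ i, α i * u.1 i + ∑ j, β j * u.2 j := by
  simp [covec]

lemma dual_apply (φ : Module.Dual ℝ (Pt n m)) (u : Pt n m) :
    φ u = ∑ i, φ ((Pi.single i 1 : Fin n → ℝ), (0 : Fin m → ℝ)) * u.1 i +
      ∑ j, φ ((0 : Fin n → ℝ), (Pi.single j 1 : Fin m → ℝ)) * u.2 j := by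
  have h : u = ∑ i, u.1 i • ((Pi.single i 1 : Fin n → ℝ), (0 : Fin m → ℝ)) +
      ∑ j, u.2 j • ((0 : Fin n → ℝ), (Pi.single j 1 : Fin m → ℝ)) := by
    refine Prod.ext ?_ ?_
    · ext k
      simp [Prod.fst_sum, Finset.sum_apply, Pi.single_apply]
    · ext k
      simp [Prod.snd_sum, Finset.sum_apply, Pi.single_apply]
  conv_lhs => rw [h]
  simp only [map_add, map_sum, map_smul, smul_eq_mul, mul_comm]

lemma thetaCovec_apply {dbar : ℕ} (w : Fin dbar → ℝ) (u : Pt n m) :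
    thetaCovec n m dbar w u =
      ∑ i : Fin n, (if h : (i : ℕ) < dbar then w ⟨(i : ℕ), h⟩ else 0) * u.1 i := by
  change covec _ _ u = _
  simp [covec_apply]

lemma thetaCovec_single {dbar : ℕ} (w : Fin dbar → ℝ) (i : Fin n) :
    thetaCovec n m dbar w (Pi.single i 1, 0) =
      if h : (i : ℕ) < dbar then w ⟨(i : ℕ), h⟩ else 0 := by
  simp [thetaCovec_apply, Pi.single_apply]

lemma omS_eq {dbar : ℕ} (a : Fin dbar → Fin n → Pt n m → ℝ) (s : Fin n)
    (hs : dbar ≤ (s : ℕ)) (p : Pt n m) :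
    omS dbar (fun k i q => -(a k i q)) s p =
      covec (Pi.single s 1) 0 + thetaCovec n m dbar (fun k => -(a k s p)) := by
  ext1 <;> ext i
  · simp only [omS, LinearMap.comp_apply, LinearMap.add_apply, covec_apply, thetaCovec_apply]
    simp only [LinearMap.inl_apply, LinearMap.single_apply, Pi.single_apply, mul_ite, mul_one,
      mul_zero, Finset.sum_ite_eq', Finset.mem_univ, if_true, Pi.zero_apply,
      Finset.sum_const_zero, add_zero]
    by_cases hi : (i : ℕ) < dbar
    · have : i ≠ s := fun h => by subst h; omega
      simp [hi, this]
    · simp [hi]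
  · simp [omS, covec_apply, thetaCovec_apply]

lemma covec_mem_spanDTheta (α : Fin n → ℝ) :
    covec α (0 : Fin m → ℝ) ∈ spanDTheta n m := by
  have : covec α (0 : Fin m → ℝ) = ∑ i, α i • covec (Pi.single i 1) (0 : Fin m → ℝ) := by
    ext1 <;> ext i <;> simp [covec_apply, Pi.single_apply]
  rw [this]
  exact Submodule.sum_mem _ fun i _ =>
    Submodule.smul_mem _ _ (Submodule.subset_span ⟨i, rfl⟩)

lemma spanDTheta_apply_xi {φ : Module.Dual ℝ (Pt n m)} (hφ : φ ∈ spanDTheta n m)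
    (v : Fin m → ℝ) : φ (0, v) = 0 := by
  induction hφ using Submodule.span_induction with
  | mem x hx => obtain ⟨i, rfl⟩ := hx; simp [covec_apply]
  | zero => simp
  | add x y _ _ hx hy => simp [hx, hy]
  | smul c x _ hx => simp [hx]

end Covectors

/-! ### Derivatives of 1-forms along `∂_ξ` -/

section LieDerivative

variable {n m : ℕ}

/-- The coordinatewise definition of `xiLie` commutes with evaluation on a fixed vector, so
identities between the forms `xiLie j ω p` can be checked vector by vector. -/
lemma xiLie_apply {ω : Pt n m → Module.Dual ℝ (Pt n m)} {p : Pt n m}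
    (hω : ∀ u, DifferentiableAt ℝ (fun q => ω q u) p) (j : Fin m) (u : Pt n m) :
    xiLie j ω p u = fderiv ℝ (fun q => ω q u) p ((0 : Fin n → ℝ), Pi.single j 1) := by
  have h : (fun q => ω q u) = fun q =>
      ∑ i, ω q ((Pi.single i 1 : Fin n → ℝ), (0 : Fin m → ℝ)) * u.1 i +
      ∑ j, ω q ((0 : Fin n → ℝ), (Pi.single j 1 : Fin m → ℝ)) * u.2 j :=
    funext fun q => dual_apply (ω q) u
  rw [h, fderiv_fun_add, fderiv_fun_sum, fderiv_fun_sum, xiLie, covec_apply]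
  · simp only [_root_.add_apply, _root_.sum_apply]
    congr 1 <;> refine Finset.sum_congr rfl fun i _ => ?_
    all_goals
      rw [fderiv_mul_const (hω _)]
      simp [mul_comm]
  · exact fun i _ => (hω _).mul_const _
  · exact fun i _ => (hω _).mul_const _
  · exact DifferentiableAt.fun_sum fun i _ => (hω _).mul_const _
  · exact DifferentiableAt.fun_sum fun i _ => (hω _).mul_const _

lemma xiLie_congr {ω ω' : Pt n m → Module.Dual ℝ (Pt n m)} {p : Pt n m}
    (h : ω =ᶠ[𝓝 p] ω') (j : Fin m) : xiLie j ω p = xiLie j ω' p := by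
  have h' : ∀ u, (fun q => ω q u) =ᶠ[𝓝 p] fun q => ω' q u := fun u =>
    h.mono fun q hq => by simp only [hq]
  unfold xiLie
  congr 1 <;> funext i <;> rw [(h' _).fderiv_eq]

/-- The Leibniz rule for linear combinations of 1-forms. -/
lemma xiLie_sum_smul {ι : Type*} [Fintype ι] {c : ι → Pt n m → ℝ}
    {ω : ι → Pt n m → Module.Dual ℝ (Pt n m)} {p : Pt n m}
    (hc : ∀ i, DifferentiableAt ℝ (c i) p)
    (hω : ∀ i u, DifferentiableAt ℝ (fun q => ω i q u) p) (j : Fin m) :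
    xiLie j (fun q => ∑ i, c i q • ω i q) p =
      ∑ i, (c i p • xiLie j (ω i) p +
        fderiv ℝ (c i) p ((0 : Fin n → ℝ), Pi.single j 1) • ω i p) := by
  refine LinearMap.ext fun u => ?_
  have he : (fun q => (∑ i, c i q • ω i q) u) = fun q => ∑ i, c i q * ω i q u := by
    funext q; simp
  have hd : ∀ i, DifferentiableAt ℝ (fun q => c i q * ω i q u) p :=
    fun i => (hc i).mul (hω i u)
  rw [xiLie_apply, he, fderiv_fun_sum fun i _ => hd i]
  · simp only [LinearMap.sum_apply, _root_.sum_apply]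
    refine Finset.sum_congr rfl fun i _ => ?_
    rw [fderiv_fun_mul (hc i) (hω i u)]
    simp [xiLie_apply (hω i), mul_comm]
  · intro v
    simp only [LinearMap.sum_apply, LinearMap.smul_apply, smul_eq_mul]
    exact DifferentiableAt.fun_sum fun i _ => (hc i).mul (hω i v)

lemma thetaCovec_differentiableAt {dbar : ℕ} {φ : Module.Dual ℝ (Pt n m)}
    {w : Pt n m → Fin dbar → ℝ} {p : Pt n m}
    (hw : ∀ k, DifferentiableAt ℝ (fun q => w q k) p) (u : Pt n m) :
    DifferentiableAt ℝ (fun q => (φ + thetaCovec n m dbar (w q)) u) p := by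
  simp only [LinearMap.add_apply, thetaCovec_apply]
  refine (differentiableAt_const _).add (DifferentiableAt.fun_sum fun i _ => ?_)
  refine DifferentiableAt.mul_const ?_ _
  split_ifs with h
  · exact hw _
  · exact differentiableAt_const _

lemma thetaCovec_smooth {dbar : ℕ} {φ : Module.Dual ℝ (Pt n m)} {U : Set (Pt n m)}
    {w : Pt n m → Fin dbar → ℝ} (hw : ∀ k, ContDiffOn ℝ (⊤ : ℕ∞) (fun q => w q k) U) :
    Smooth1FormOn U (fun q => φ + thetaCovec n m dbar (w q)) := by
  intro u
  simp only [LinearMap.add_apply, thetaCovec_apply]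
  refine contDiffOn_const.add (ContDiffOn.sum fun i _ => ?_)
  refine ContDiffOn.mul ?_ contDiffOn_const
  split_ifs with h
  · exact hw _
  · exact contDiffOn_const

/-- A constant summand does not contribute, and the coefficients of `Σ w_k dθᵏ` are
differentiated entrywise. -/
lemma xiLie_thetaCovec {dbar : ℕ} {φ : Module.Dual ℝ (Pt n m)}
    {w : Pt n m → Fin dbar → ℝ} {p : Pt n m}
    (hw : ∀ k, DifferentiableAt ℝ (fun q => w q k) p) (j : Fin m) :
    xiLie j (fun q => φ + thetaCovec n m dbar (w q)) p =
      thetaCovec n m dbar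
        (fun k => fderiv ℝ (fun q => w q k) p ((0 : Fin n → ℝ), Pi.single j 1)) := by
  refine LinearMap.ext fun u => ?_
  rw [xiLie_apply (thetaCovec_differentiableAt hw)]
  simp only [LinearMap.add_apply, thetaCovec_apply]
  have hd : ∀ i : Fin n, DifferentiableAt ℝ
      (fun q => if h : (i : ℕ) < dbar then w q ⟨i, h⟩ else 0) p := by
    intro i
    split_ifs with h
    · exact hw _
    · exact differentiableAt_const _
  rw [fderiv_const_add, fderiv_fun_sum fun i _ => (hd i).mul_const _,
    _root_.sum_apply]
  refine Finset.sum_congr rfl fun i _ => ?_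
  rw [fderiv_mul_const (hd i)]
  by_cases h : (i : ℕ) < dbar <;> simp [h, mul_comm]

lemma xiDerivs_contDiffOn {U : Set (Pt n m)} (hU : IsOpen U) {g : Pt n m → ℝ}
    (hg : ContDiffOn ℝ (⊤ : ℕ∞) g U) (js : List (Fin m)) :
    ContDiffOn ℝ (⊤ : ℕ∞) (xiDerivs js g) U := by
  induction js with
  | nil => exact hg
  | cons j js ih =>
    exact (ih.fderiv_of_isOpen hU (by simp)).clm_apply contDiffOn_const

end LieDerivative

/-! ### Invariance of the span of a frame -/

section Frames

lemma differentiableAt_det {E ι : Type*} [NormedAddCommGroup E] [NormedSpace ℝ E] [Fintype ι]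
    [DecidableEq ι] {G : E → Matrix ι ι ℝ} {p : E}
    (hG : ∀ i j, DifferentiableAt ℝ (fun q => G q i j) p) :
    DifferentiableAt ℝ (fun q => (G q).det) p := by
  simp only [Matrix.det_apply]
  refine DifferentiableAt.fun_sum fun σ _ => DifferentiableAt.const_smul ?_ _
  exact (HasFDerivAt.finsetProd (g := fun i q => G q (σ i) i)
    fun i _ => (hG (σ i) i).hasFDerivAt).differentiableAt

/-- The coefficients expressing a differentiable vector `v` in a differentiable linearly
independent family of rows `A` are differentiable: they solve the linear system with the
Gram matrix `A Aᵀ`, whose determinant does not vanish, and are given by Cramer's rule. -/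
lemma differentiableAt_coeff {E ι κ : Type*} [NormedAddCommGroup E] [NormedSpace ℝ E]
    [Fintype ι] [Fintype κ] {A : E → Matrix ι κ ℝ} {v : E → κ → ℝ} {c : E → ι → ℝ} {p : E}
    (hA : ∀ i k, DifferentiableAt ℝ (fun q => A q i k) p)
    (hv : ∀ k, DifferentiableAt ℝ (fun q => v q k) p)
    (hLI : LinearIndependent ℝ (A p))
    (hc : ∀ᶠ q in 𝓝 p, ∀ k, v q k = ∑ i, c q i * A q i k) (i : ι) :
    DifferentiableAt ℝ (fun q => c q i) p := by
  classical
  have hG : ∀ i j, DifferentiableAt ℝ (fun q => (A q * (A q).transpose) i j) p := by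
    intro i j
    simp only [Matrix.mul_apply, Matrix.transpose_apply]
    exact DifferentiableAt.fun_sum fun k _ => (hA i k).mul (hA j k)
  have hw : ∀ i, DifferentiableAt ℝ (fun q => (A q).mulVec (v q) i) p := by
    intro i
    simp only [Matrix.mulVec, dotProduct]
    exact DifferentiableAt.fun_sum fun k _ => (hA i k).mul (hv k)
  have hdet := differentiableAt_det hG
  have hdet0 : (A p * (A p).transpose).det ≠ 0 := by
    intro h0
    obtain ⟨x, hx, hx0⟩ := Matrix.exists_mulVec_eq_zero_iff.mpr h0
    have h1 : (A p).transpose.mulVec x = 0 := by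
      have := Matrix.self_mul_conjTranspose_mulVec_eq_zero (A p) x
      rw [Matrix.conjTranspose_eq_transpose_of_trivial] at this
      exact this.mp hx0
    refine hx (funext (Fintype.linearIndependent_iff.mp hLI x ?_))
    ext k
    have := congrFun h1 k
    simp only [Matrix.mulVec, dotProduct, Matrix.transpose_apply] at this
    simpa [mul_comm] using this
  have hcr : ∀ i, DifferentiableAt ℝ
      (fun q => (A q * (A q).transpose).cramer ((A q).mulVec (v q)) i) p := by
    intro i
    simp only [Matrix.cramer_apply]
    refine differentiableAt_det fun k l => ?_
    simp only [Matrix.updateCol_apply]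
    split_ifs
    · exact hw k
    · exact hG k l
  refine ((hdet.inv hdet0).mul (hcr i)).congr_of_eventuallyEq ?_
  filter_upwards [hc, hdet.continuousAt.eventually_ne hdet0] with q hq hq0
  have h1 : (A q).mulVec (v q) = (A q * (A q).transpose).mulVec (c q) := by
    rw [← Matrix.mulVec_mulVec]
    congr 1
    ext k
    simp [hq k, Matrix.mulVec, dotProduct, mul_comm]
  simp only [Pi.mul_apply, Pi.inv_apply]
  rw [h1, Matrix.cramer_eq_adjugate_mulVec, Matrix.mulVec_mulVec, Matrix.adjugate_mul,
    Matrix.smul_mulVec, Matrix.one_mulVec, Pi.smul_apply, smul_eq_mul]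
  field_simp

variable {n m : ℕ}

/-- By the Leibniz rule it is enough to check invariance of a codistribution on a
differentiable frame. -/
lemma invariantXi_span {ι : Type*} [Fintype ι] {U : Set (Pt n m)} (hU : IsOpen U)
    {η : ι → Pt n m → Module.Dual ℝ (Pt n m)}
    (hη : ∀ i, ∀ p ∈ U, ∀ u, DifferentiableAt ℝ (fun q => η i q u) p)
    (hLI : ∀ p ∈ U, LinearIndependent ℝ (fun i => η i p))
    (hL : ∀ i j, ∀ p ∈ U, xiLie j (η i) p ∈
      Submodule.span ℝ (Set.range fun i => η i p)) :
    InvariantXi U (fun p => Submodule.span ℝ (Set.range fun i => η i p)) := by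
  intro ω hω hmem j p hp
  have hex : ∀ q, ∃ c : ι → ℝ, q ∈ U → ∑ i, c i • η i q = ω q := by
    intro q
    by_cases hq : q ∈ U
    · obtain ⟨c, hc⟩ := (Submodule.mem_span_range_iff_exists_fun ℝ).mp (hmem q hq)
      exact ⟨c, fun _ => hc⟩
    · exact ⟨0, fun h => absurd h hq⟩
  choose c hc using hex
  have hev : ∀ᶠ q in 𝓝 p, q ∈ U := hU.mem_nhds hp
  -- The coordinate vectors, used to turn covectors into rows of numbers.
  let e : Fin n ⊕ Fin m → Pt n m := Sum.elim (fun i => (Pi.single i 1, 0))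
    (fun j => (0, Pi.single j 1))
  have hcd : ∀ i, DifferentiableAt ℝ (fun q => c q i) p := by
    refine differentiableAt_coeff (A := fun q i k => η i q (e k)) (v := fun q k => ω q (e k))
      (fun i k => hη i p hp _)
      (fun k => (((hω _).contDiffAt (hU.mem_nhds hp)).differentiableAt (by simp))) ?_ ?_
    · rw [Fintype.linearIndependent_iff]
      intro g hg
      refine Fintype.linearIndependent_iff.mp (hLI p hp) g (LinearMap.ext fun u => ?_)
      have h0 : ∀ k, (∑ i, g i • η i p) (e k) = 0 := by
        intro k
        have := congrFun hg k
        simpa using this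
      rw [dual_apply]
      have h1 := fun i => h0 (Sum.inl i)
      have h2 := fun i => h0 (Sum.inr i)
      simp only [e, Sum.elim_inl, Sum.elim_inr] at h1 h2
      simp only [h1, h2]
      simp
    · filter_upwards [hev] with q hq k
      rw [← hc q hq]
      simp
  have heq : ω =ᶠ[𝓝 p] fun q => ∑ i, c q i • η i q := by
    filter_upwards [hev] with q hq using (hc q hq).symm
  rw [xiLie_congr heq, xiLie_sum_smul hcd (fun i u => hη i p hp u)]
  exact Submodule.sum_mem _ fun i _ => Submodule.add_mem _
    (Submodule.smul_mem _ _ (hL i j p hp))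
    (Submodule.smul_mem _ _ (Submodule.subset_span ⟨i, rfl⟩))

end Frames

/-! ### The smallest invariant codistribution -/

/-- with `M̂` a maximal everywhere linearly independent selection of rows of
`M` and `(ρ¹,…,ρ^{rank M})ᵀ = −M̂·(dθ¹,…,dθ^d̄)ᵀ`, the codistribution
`P̂ = span{ρ¹,…,ρ^{rank M}, ω¹,…,ω^{n−d̄}}` is the smallest codistribution invariant
w.r.t. `span{∂_ξ}` containing `P ∩ span{dθ}`; its spanning 1-forms are pointwise
linearly independent and `dim P̂ = n − d̄ + rank M`. -/
theorem stmt6 (n m dbar d : ℕ) (hn : 1 ≤ n) (hm : 1 ≤ m)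
    (hdd : dbar ≤ d) (hdn : dbar ≤ n) (hdm : d - dbar ≤ m)
    (Θ : Set (Fin n → ℝ)) (Ξ : Set (Fin m → ℝ))
    (hΘo : IsOpen Θ) (hΘc : IsConnected Θ) (hΞo : IsOpen Ξ) (hΞc : IsConnected Ξ)
    (a : Fin dbar → Fin n → Pt n m → ℝ)
    (b : Fin dbar → Fin m → Pt n m → ℝ)
    (bl : Fin (d - dbar) → Fin m → Pt n m → ℝ)
    (ha : ∀ k i, ContDiffOn ℝ (⊤ : ℕ∞) (a k i) (Θ ×ˢ Ξ))
    (hb : ∀ k j, ContDiffOn ℝ (⊤ : ℕ∞) (b k j) (Θ ×ˢ Ξ))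
    (hbl : ∀ l j, ContDiffOn ℝ (⊤ : ℕ∞) (bl l j) (Θ ×ˢ Ξ))
    -- the matrix M and its constant rank rk
    (r rk : ℕ) (Mrow : Fin r → Pt n m → Fin dbar → ℝ)
    (hMrows : ∀ i : Fin r, ∃ (js : List (Fin m)) (ib : Fin n), js ≠ [] ∧ dbar ≤ (ib : ℕ) ∧
      ∀ p k, Mrow i p k = xiDerivs js (fun q => a k ib q) p)
    (hMrank : ∀ p ∈ Θ ×ˢ Ξ, (Matrix.of fun i k => Mrow i p k).rank = rk)
    (hMspan : ∀ (js : List (Fin m)), js ≠ [] → ∀ ib : Fin n, dbar ≤ (ib : ℕ) →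
      ∀ p ∈ Θ ×ˢ Ξ, (fun k => xiDerivs js (fun q => a k ib q) p) ∈
        Submodule.span ℝ (Set.range fun i => Mrow i p))
    -- M̂ : a maximal set of rows of M that are linearly independent at every point
    (Mhat : Fin rk → Pt n m → Fin dbar → ℝ)
    (hMhatRows : ∀ i : Fin rk, ∃ i' : Fin r, ∀ p, Mhat i p = Mrow i' p)
    (hMhatLI : ∀ p ∈ Θ ×ˢ Ξ, LinearIndependent ℝ fun i : Fin rk => Mhat i p) :
    -- (i) P̂ ⊆ span{dθ} and P̂ contains P ∩ span{dθ} pointwise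
    (∀ p ∈ Θ ×ˢ Ξ,
      Submodule.span ℝ (Set.range (Sum.elim
          (fun i : Fin rk =>
            covec (fun iθ => if h : (iθ : ℕ) < dbar then -(Mhat i p ⟨(iθ : ℕ), h⟩) else 0)
              (0 : Fin m → ℝ))
          (fun s : {s : Fin n // dbar ≤ (s : ℕ)} =>
            omS dbar (fun k i q => -(a k i q)) s.1 p)))
        ≤ spanDTheta n m) ∧
    (∀ p ∈ Θ ×ˢ Ξ,
      (Submodule.span ℝ (Set.range (Sum.elim
          (fun s : {s : Fin n // dbar ≤ (s : ℕ)} =>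
            omS dbar (fun k i q => -(a k i q)) s.1 p)
          (fun t : {t : Fin m // (t : ℕ) < m - (d - dbar)} =>
            omT dbar d (fun k j q => -(b k j q)) (fun l j q => -(bl l j q)) t.1 p)))
        ⊓ spanDTheta n m)
        ≤ Submodule.span ℝ (Set.range (Sum.elim
          (fun i : Fin rk =>
            covec (fun iθ => if h : (iθ : ℕ) < dbar then -(Mhat i p ⟨(iθ : ℕ), h⟩) else 0)
              (0 : Fin m → ℝ))
          (fun s : {s : Fin n // dbar ≤ (s : ℕ)} =>
            omS dbar (fun k i q => -(a k i q)) s.1 p)))) ∧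
    -- (ii) P̂ is invariant w.r.t. span{∂_ξ}
    InvariantXi (Θ ×ˢ Ξ) (fun p => Submodule.span ℝ (Set.range (Sum.elim
        (fun i : Fin rk =>
          covec (fun iθ => if h : (iθ : ℕ) < dbar then -(Mhat i p ⟨(iθ : ℕ), h⟩) else 0)
            (0 : Fin m → ℝ))
        (fun s : {s : Fin n // dbar ≤ (s : ℕ)} =>
          omS dbar (fun k i q => -(a k i q)) s.1 p)))) ∧
    -- (iii) every invariant codistribution containing P ∩ span{dθ} contains P̂
    (∀ Q : Pt n m → Submodule ℝ (Module.Dual ℝ (Pt n m)),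
      IsCodistribOn (Θ ×ˢ Ξ) Q → InvariantXi (Θ ×ˢ Ξ) Q →
      (∀ p ∈ Θ ×ˢ Ξ,
        (Submodule.span ℝ (Set.range (Sum.elim
            (fun s : {s : Fin n // dbar ≤ (s : ℕ)} =>
              omS dbar (fun k i q => -(a k i q)) s.1 p)
            (fun t : {t : Fin m // (t : ℕ) < m - (d - dbar)} =>
              omT dbar d (fun k j q => -(b k j q)) (fun l j q => -(bl l j q)) t.1 p)))
          ⊓ spanDTheta n m) ≤ Q p) →
      ∀ p ∈ Θ ×ˢ Ξ,
        Submodule.span ℝ (Set.range (Sum.elim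
          (fun i : Fin rk =>
            covec (fun iθ => if h : (iθ : ℕ) < dbar then -(Mhat i p ⟨(iθ : ℕ), h⟩) else 0)
              (0 : Fin m → ℝ))
          (fun s : {s : Fin n // dbar ≤ (s : ℕ)} =>
            omS dbar (fun k i q => -(a k i q)) s.1 p))) ≤ Q p) ∧
    -- the spanning 1-forms of P̂ are pointwise linearly independent, so
    -- dim P̂ = n − d̄ + rank M
    (∀ p ∈ Θ ×ˢ Ξ, LinearIndependent ℝ (Sum.elim
        (fun i : Fin rk =>
          covec (fun iθ => if h : (iθ : ℕ) < dbar then -(Mhat i p ⟨(iθ : ℕ), h⟩) else 0)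
            (0 : Fin m → ℝ))
        (fun s : {s : Fin n // dbar ≤ (s : ℕ)} =>
          omS dbar (fun k i q => -(a k i q)) s.1 p))) ∧
    (∀ p ∈ Θ ×ˢ Ξ,
      Module.finrank ℝ (Submodule.span ℝ (Set.range (Sum.elim
        (fun i : Fin rk =>
          covec (fun iθ => if h : (iθ : ℕ) < dbar then -(Mhat i p ⟨(iθ : ℕ), h⟩) else 0)
            (0 : Fin m → ℝ))
        (fun s : {s : Fin n // dbar ≤ (s : ℕ)} =>
          omS dbar (fun k i q => -(a k i q)) s.1 p)))) = n - dbar + rk) := by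
  have hU : IsOpen (Θ ×ˢ Ξ) := hΘo.prod hΞo
  set U := Θ ×ˢ Ξ with hUdef
  have hρ : ∀ (i : Fin rk) (p : Pt n m),
      covec (fun iθ => if h : (iθ : ℕ) < dbar then -(Mhat i p ⟨(iθ : ℕ), h⟩) else 0)
        (0 : Fin m → ℝ) = thetaCovec n m dbar (-(Mhat i p)) := fun i p => rfl
  simp only [hρ]
  have hxd : ∀ js k (ib : Fin n), ContDiffOn ℝ (⊤ : ℕ∞) (xiDerivs js (fun q => a k ib q)) U :=
    fun js k ib => xiDerivs_contDiffOn hU (ha k ib) js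
  have hda : ∀ {g : Pt n m → ℝ}, ContDiffOn ℝ (⊤ : ℕ∞) g U → ∀ p ∈ U,
      DifferentiableAt ℝ g p := fun hg p hp =>
    (hg.contDiffAt (hU.mem_nhds hp)).differentiableAt (by simp)
  have hMh : ∀ i : Fin rk, ∃ (js : List (Fin m)) (ib : Fin n), js ≠ [] ∧ dbar ≤ (ib : ℕ) ∧
      ∀ p, Mhat i p = fun k => xiDerivs js (fun q => a k ib q) p := by
    intro i
    obtain ⟨i', hi'⟩ := hMhatRows i
    obtain ⟨js, ib, h1, h2, h3⟩ := hMrows i'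
    exact ⟨js, ib, h1, h2, fun p => by rw [hi' p]; exact funext (h3 p)⟩
  -- `M̂` and `M` have the same row space.
  have hrow : ∀ p ∈ U, Submodule.span ℝ (Set.range fun i => Mrow i p) =
      Submodule.span ℝ (Set.range fun i => Mhat i p) := by
    intro p hp
    symm
    refine Submodule.eq_of_le_of_finrank_eq ?_ ?_
    · refine Submodule.span_mono ?_
      rintro _ ⟨i, rfl⟩
      obtain ⟨i', hi'⟩ := hMhatRows i
      exact ⟨i', (hi' p).symm⟩
    · have h1 := hMrank p hp
      rw [Matrix.rank_eq_finrank_span_row] at h1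
      rw [finrank_span_eq_card (hMhatLI p hp), Fintype.card_fin]
      exact h1.symm
  have homS : ∀ s : {s : Fin n // dbar ≤ (s : ℕ)}, omS dbar (fun k i q => -(a k i q)) s.1 =
      fun p : Pt n m =>
        covec (Pi.single s.1 1) 0 + thetaCovec n m dbar (fun k => -(a k s.1 p)) :=
    fun s => funext (omS_eq a s.1 s.2)
  have homS_mem : ∀ (s : {s : Fin n // dbar ≤ (s : ℕ)}) p,
      omS dbar (fun k i q => -(a k i q)) s.1 p ∈ spanDTheta n m :=
    fun s p => covec_mem_spanDTheta _
  -- Covectors `Σ w_k dθᵏ` with `w` in the row space of `M` lie in `P̂`.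
  have hspan : ∀ p ∈ U, ∀ w ∈ Submodule.span ℝ (Set.range fun i => Mrow i p),
      thetaCovec n m dbar w ∈ Submodule.span ℝ (Set.range (Sum.elim
        (fun i : Fin rk => thetaCovec n m dbar (-(Mhat i p)))
        (fun s : {s : Fin n // dbar ≤ (s : ℕ)} =>
          omS dbar (fun k i q => -(a k i q)) s.1 p))) := by
    intro p hp w hw
    rw [hrow p hp] at hw
    obtain ⟨c, rfl⟩ := (Submodule.mem_span_range_iff_exists_fun ℝ).mp hw
    rw [map_sum]
    refine Submodule.sum_mem _ fun i _ => ?_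
    have : thetaCovec n m dbar (c i • Mhat i p) =
        (-c i) • thetaCovec n m dbar (-(Mhat i p)) := by
      simp
    rw [this]
    exact Submodule.smul_mem _ _ (Submodule.subset_span ⟨Sum.inl i, rfl⟩)
  have hLI : ∀ p ∈ U, LinearIndependent ℝ (Sum.elim
      (fun i : Fin rk => thetaCovec n m dbar (-(Mhat i p)))
      (fun s : {s : Fin n // dbar ≤ (s : ℕ)} =>
        omS dbar (fun k i q => -(a k i q)) s.1 p)) := by
    intro p hp
    rw [Fintype.linearIndependent_iff]
    intro g hg
    rw [Fintype.sum_sum_type] at hg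
    simp only [Sum.elim_inl, Sum.elim_inr] at hg
    have hs : ∀ s, g (Sum.inr s) = 0 := by
      intro s
      have h := LinearMap.congr_fun hg ((Pi.single s.1 1 : Fin n → ℝ), (0 : Fin m → ℝ))
      simp only [homS, LinearMap.add_apply, LinearMap.sum_apply, LinearMap.smul_apply,
        thetaCovec_single, s.2.not_gt, covec_apply] at h
      simpa [Pi.single_apply, Subtype.coe_inj] using h
    simp only [hs, zero_smul, Finset.sum_const_zero, add_zero] at hg
    have hi : ∀ i, g (Sum.inl i) = 0 := by
      refine Fintype.linearIndependent_iff.mp (hMhatLI p hp) _ (funext fun k => ?_)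
      have h := LinearMap.congr_fun hg
        ((Pi.single (Fin.castLE hdn k) 1 : Fin n → ℝ), (0 : Fin m → ℝ))
      simpa [thetaCovec_single] using h
    rintro (i | s)
    exacts [hi i, hs s]
  refine ⟨?_, ?_, ?_, ?_, hLI, ?_⟩
  · intro p hp
    rw [Submodule.span_le]
    rintro _ ⟨i | s, rfl⟩
    · exact covec_mem_spanDTheta _
    · exact homS_mem s p
  · rintro p hp φ ⟨hφ, hφ'⟩
    obtain ⟨c, rfl⟩ := (Submodule.mem_span_range_iff_exists_fun ℝ).mp hφ
    -- The `dξ^t` coefficient of the combination is the coefficient of `ω^t`.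
    have ht : ∀ t, c (Sum.inr t) = 0 := by
      intro t
      have h := spanDTheta_apply_xi hφ' (Pi.single t.1 1)
      rw [Fintype.sum_sum_type] at h
      have h2 : ∀ t' : {t : Fin m // (t : ℕ) < m - (d - dbar)},
          omT dbar d (fun k j q => -(b k j q)) (fun l j q => -(bl l j q)) t'.1 p
            ((0 : Fin n → ℝ), (Pi.single t.1 1 : Fin m → ℝ)) = if t = t' then 1 else 0 := by
        intro t'
        have h3 := t.2.not_ge
        rw [omT, covec_apply, Finset.sum_eq_single t.1]
        · simp [h3, Subtype.ext_iff, Fin.ext_iff]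
        · intro j _ hj
          simp [hj]
        · simp
      simp only [Sum.elim_inl, Sum.elim_inr, LinearMap.add_apply, LinearMap.sum_apply,
        LinearMap.smul_apply, h2, spanDTheta_apply_xi (homS_mem _ p)] at h
      simpa using h
    rw [Fintype.sum_sum_type]
    simp only [ht, Sum.elim_inl, Sum.elim_inr, zero_smul, Finset.sum_const_zero, add_zero]
    exact Submodule.sum_mem _ fun s _ =>
      Submodule.smul_mem _ _ (Submodule.subset_span ⟨Sum.inr s, rfl⟩)
  · have hinv := invariantXi_span (U := U) hU
      (η := fun (i : Fin rk ⊕ {s : Fin n // dbar ≤ (s : ℕ)}) p => Sum.elim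
        (fun i : Fin rk => thetaCovec n m dbar (-(Mhat i p)))
        (fun s : {s : Fin n // dbar ≤ (s : ℕ)} =>
          omS dbar (fun k i q => -(a k i q)) s.1 p) i) ?_ hLI ?_
    · exact hinv
    · rintro (i | s) p hp u
      · obtain ⟨js, ib, -, -, h⟩ := hMh i
        simp only [Sum.elim_inl, h]
        have := thetaCovec_differentiableAt (φ := 0) (p := p) (n := n) (m := m)
          (w := fun q => -fun k => xiDerivs js (fun q => a k ib q) q)
          (fun k => (hda (hxd js k ib) p hp).neg) u
        simpa only [zero_add] using this
      · simp only [Sum.elim_inr, homS]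
        exact thetaCovec_differentiableAt (fun k => (hda (ha k s.1) p hp).neg) u
    · rintro (i | s) j p hp
      · obtain ⟨js, ib, hjs, hib, h⟩ := hMh i
        simp only [Sum.elim_inl]
        have h1 := xiLie_thetaCovec (φ := 0) (p := p) (n := n) (m := m)
          (w := fun q => -Mhat i q) (fun k => by
            simp only [h]; exact (hda (hxd js k ib) p hp).neg) j
        simp only [zero_add] at h1
        rw [h1]
        refine hspan p hp _ ?_
        have h2 := Submodule.neg_mem _ (hMspan (j :: js) (by simp) ib hib p hp)
        convert h2 using 1
        funext k
        simp only [h, Pi.neg_apply, fderiv_fun_neg, xiDerivs]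
        rfl
      · simp only [Sum.elim_inr, homS]
        rw [xiLie_thetaCovec (w := fun q k => -(a k s.1 q))
          (fun k => (hda (ha k s.1) p hp).neg)]
        have h2 := hspan p hp _ (Submodule.neg_mem _ (hMspan [j] (by simp) s.1 s.2 p hp))
        simp only [homS] at h2
        refine Set.mem_of_eq_of_mem ?_ h2
        congr 1
        funext k
        simp only [Pi.neg_apply, fderiv_fun_neg, xiDerivs]
        rfl
  · intro Q _ hQ hle p hp
    have hS : ∀ (s : {s : Fin n // dbar ≤ (s : ℕ)}), ∀ q ∈ U,
        omS dbar (fun k i q => -(a k i q)) s.1 q ∈ Q q := fun s q hq =>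
      hle q hq ⟨Submodule.subset_span ⟨Sum.inl s, rfl⟩, homS_mem s q⟩
    -- Iterated derivatives of `ω^s` stay in `Q`; the constant `dθ^s` drops out after the first.
    have hD : ∀ (js : List (Fin m)), js ≠ [] → ∀ s : {s : Fin n // dbar ≤ (s : ℕ)},
        ∀ q ∈ U, thetaCovec n m dbar (fun k => -xiDerivs js (fun q => a k s.1 q) q) ∈ Q q := by
      intro js
      induction js with
      | nil => exact fun h => absurd rfl h
      | cons j js ih =>
        intro _ s q hq
        have key : ∀ φ : Module.Dual ℝ (Pt n m),
            (∀ q ∈ U, φ + thetaCovec n m dbar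
              (fun k => -xiDerivs js (fun q => a k s.1 q) q) ∈ Q q) →
            thetaCovec n m dbar
              (fun k => -xiDerivs (j :: js) (fun q => a k s.1 q) q) ∈ Q q := by
          intro φ hφ
          have h1 := hQ _ (thetaCovec_smooth (φ := φ) fun k => (hxd js k s.1).neg) hφ j q hq
          rw [xiLie_thetaCovec (w := fun q k => -xiDerivs js (fun q => a k s.1 q) q)
            (fun k => (hda (hxd js k s.1) q hq).neg)] at h1
          convert h1 using 2
          funext k
          simp only [fderiv_fun_neg, xiDerivs]
          rfl
        rcases eq_or_ne js [] with rfl | hne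
        · refine key (covec (Pi.single s.1 1) 0) fun q hq => ?_
          have := hS s q hq
          rw [homS] at this
          exact this
        · exact key 0 fun q hq => by rw [zero_add]; exact ih hne s q hq
    rw [Submodule.span_le]
    rintro _ ⟨i | s, rfl⟩
    · obtain ⟨js, ib, hjs, hib, h⟩ := hMh i
      have := hD js hjs ⟨ib, hib⟩ p hp
      simp only [Sum.elim_inl, h]
      exact this
    · exact hS s p hp
  · intro p hp
    refine (finrank_span_eq_card (hLI p hp)).trans ?_
    rw [Fintype.card_sum, Fintype.card_fin, add_comm]
    congr 1
    have h := Fintype.card_subtype_compl (fun s : Fin n => (s : ℕ) < dbar)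
    have h2 : Fintype.card {s : Fin n // (s : ℕ) < dbar} = dbar := by
      rw [Fintype.card_subtype]
      simp [Fin.card_filter_val_lt, hdn]
    simp only [not_lt, Fintype.card_fin, h2] at h
    exact h
end
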